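/- Let G and Ω be domains in ℂ and let Φ = (φₙ) be an eventually injective sequence of holomorphic maps from G to Ω. Then there exists a (Φ,G,Ω)-universal function if and only if for every G-convex compact set K ⊆ G, every Ω-convex compact set L ⊆ Ω, and every N ∈ ℕ, there exists n ≥ N such that φₙ(K) ∩ L = ∅ and φₙ(K) ∪ L is Ω-convex. -/

import Mathlib

open Set Metric Bornology Filter

/-- A *hole* of `E` is a nonempty bounded connected component of `ℂ \ E`. -/
def IsHole (E C : Set ℂ) : Prop :=
  (∃ z ∈ Eᶜ, C = connectedComponentIn Eᶜ z) ∧ Bornology.IsBounded C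

/-- A compact set `K` contained in an open set `Ω` is `Ω`-*convex* if every hole of `K`
contains a point of `ℂ \ Ω`. -/
def OmegaConvex (Ω K : Set ℂ) : Prop :=
  ∀ C : Set ℂ, IsHole K C → (C ∩ Ωᶜ).Nonempty

/-- The *polynomial hull* of `K`: the union of `K` and all of its holes. -/
def polyHull (K : Set ℂ) : Set ℂ :=
  K ∪ {z | z ∈ Kᶜ ∧ Bornology.IsBounded (connectedComponentIn Kᶜ z)}

/-- A sequence of maps is *eventually injective* on `G`: for every compact `K ⊆ G`, the maps
are eventually injective on a neighbourhood of `K` in `G`. -/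
def EventuallyInjective (G : Set ℂ) (φ : ℕ → ℂ → ℂ) : Prop :=
  ∀ K : Set ℂ, K ⊆ G → IsCompact K →
    ∃ N : ℕ, ∀ n ≥ N, ∃ U : Set ℂ, IsOpen U ∧ K ⊆ U ∧ U ⊆ G ∧ Set.InjOn (φ n) U

/-- `f` is `(Φ, G, Ω)`-*universal*: the family `{f ∘ φ n : n ∈ ℕ}` is dense in `H(G)` for the
topology of locally uniform convergence, i.e. every `g` holomorphic on `G` can be approximated
uniformly on every compact subset of `G` by functions `f ∘ φ n`. -/
def UniversalFor (G : Set ℂ) (φ : ℕ → ℂ → ℂ) (f : ℂ → ℂ) : Prop :=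
  ∀ g : ℂ → ℂ, DifferentiableOn ℂ g G →
    ∀ K : Set ℂ, K ⊆ G → IsCompact K → ∀ ε : ℝ, 0 < ε →
      ∃ n : ℕ, ∀ z ∈ K, ‖f (φ n z) - g z‖ < ε

/-- `E` has no hole (for a domain: simple connectivity). -/
def HasNoHole (E : Set ℂ) : Prop := ¬ ∃ C : Set ℂ, IsHole E C

/-- A *Jordan curve*: the image of the unit circle under an injective continuous map. -/
def IsJordanCurve (C : Set ℂ) : Prop :=
  ∃ γ : ℂ → ℂ, ContinuousOn γ (Metric.sphere 0 1) ∧ Set.InjOn γ (Metric.sphere 0 1) ∧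
    C = γ '' Metric.sphere 0 1

/-- A *Jordan arc*: the image of `[0,1]` under an injective continuous map. -/
def IsJordanArc (C : Set ℂ) : Prop :=
  ∃ γ : ℝ → ℂ, ContinuousOn γ (Set.Icc 0 1) ∧ Set.InjOn γ (Set.Icc 0 1) ∧
    C = γ '' Set.Icc 0 1

/-- A compact set is *regular* if its boundary is a union of Jordan curves. -/
def RegularCompact (K : Set ℂ) : Prop :=
  ∃ 𝒞 : Set (Set ℂ), (∀ C ∈ 𝒞, IsJordanCurve C) ∧ frontier K = ⋃₀ 𝒞

/-- `K` is `Ω`-*connected*: it has no hole if `Ω` is simply connected, and has at least one hole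
if `Ω` is not simply connected. -/
def OmegaConnectedSet (Ω K : Set ℂ) : Prop :=
  (HasNoHole Ω → HasNoHole K) ∧ (¬ HasNoHole Ω → ∃ C : Set ℂ, IsHole K C)

/-- Membership in the family `M(Ω)` of nonempty compact subsets of `Ω` that are regular,
connected, `Ω`-connected and `Ω`-convex. -/
def MemM (Ω K : Set ℂ) : Prop :=
  K.Nonempty ∧ IsCompact K ∧ K ⊆ Ω ∧ RegularCompact K ∧ IsConnected K ∧
    OmegaConnectedSet Ω K ∧ OmegaConvex Ω K

/-- `f` is `(Φ, M)`-*universal*: for every `K ∈ M`, the restrictions of the `f ∘ φ n` to `K`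
are dense in `C(K)`. -/
def MUniversal (M : Set (Set ℂ)) (φ : ℕ → ℂ → ℂ) (f : ℂ → ℂ) : Prop :=
  ∀ K ∈ M, ∀ h : ℂ → ℂ, ContinuousOn h K → ∀ ε : ℝ, 0 < ε →
    ∃ n : ℕ, ∀ z ∈ K, ‖f (φ n z) - h z‖ < ε

/-!
Approximating `a + q`, where `q` is small on `K` and large at one point of every component of
`O \ K` that comes near `K` (`O` a neighbourhood of `K`) and the constant `a` is huge, a universal
`f` gives an `n` such that `φₙ(K)` is disjoint from `L` and `f * (f - a)` violates the maximum
principle on every hole of `φₙ(K) ∪ L` contained in `Ω`, except on holes of `L`.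

Conversely, `H(Ω)` is a Baire space and `H(G)` is second countable, so it is enough that the
composition operators `u ↦ u ∘ φₙ` are jointly topologically transitive. Given `F ∈ H(Ω)` and
`g ∈ H(G)`, Runge's theorem on the `Ω`-convex set `φₙ(K) ∪ L` yields a function of `H(Ω)` close to
`F` on `L` and to `g ∘ φₙ⁻¹` on `φₙ(K)`.
-/

section DBar

open MeasureTheory Complex

open scoped Real Topology ContDiff

theorem integrableOn_polarCoord_target {E : Type*} [NormedAddCommGroup E] {F : ℝ × ℝ → E}
    (hF : Continuous F) {R : ℝ} (hR : ∀ p : ℝ × ℝ, R < p.1 → F p = 0) :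
    IntegrableOn F polarCoord.target := by
  have hcompact : IntegrableOn F (Icc 0 R ×ˢ Icc (-π) π) :=
    hF.continuousOn.integrableOn_compact (isCompact_Icc.prod isCompact_Icc)
  refine hcompact.of_forall_sdiff_eq_zero polarCoord.open_target.measurableSet ?_
  rintro ⟨r, θ⟩ ⟨⟨hr, hθ⟩, hp⟩
  by_contra hne
  exact hp ⟨⟨(mem_Ioi.1 hr).le, not_lt.1 fun h => hne (hR _ h)⟩, Ioo_subset_Icc_self hθ⟩

theorem exists_forall_circleMap_notMem {K : Set ℂ} (hK : IsBounded K) (z : ℂ) :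
    ∃ R : ℝ, ∀ r, R < r → ∀ θ, circleMap z r θ ∉ K := by
  obtain ⟨R, hR⟩ := hK.subset_closedBall z
  refine ⟨R, fun r hr θ hmem => ?_⟩
  have hle : |r| ≤ R := by
    simpa [circleMap, dist_eq_norm] using mem_closedBall.1 (hR hmem)
  exact absurd ((le_abs_self r).trans hle) hr.not_ge

variable {E : Type*} [NormedAddCommGroup E] [NormedSpace ℂ E]

/-- The Cauchy–Riemann (Wirtinger) operator `∂̄ = (∂ₓ + i ∂ᵧ) / 2`. -/
noncomputable def dbar (u : ℂ → E) (w : ℂ) : E :=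
  (1 / 2 : ℂ) • (fderiv ℝ u w 1 + I • fderiv ℝ u w I)

theorem dbar_eq_zero_of_differentiableAt {u : ℂ → E} {w : ℂ} (hu : DifferentiableAt ℂ u w) :
    dbar u w = 0 := by
  have hI : fderiv ℂ u w I = I • fderiv ℂ u w 1 := by
    rw [← map_smul, smul_eq_mul, mul_one]
  rw [dbar, hu.fderiv_restrictScalars ℝ]
  simp only [ContinuousLinearMap.coe_restrictScalars', hI, smul_smul, I_mul_I, neg_smul, one_smul,
    add_neg_cancel, smul_zero]

theorem dbar_congr {u v : ℂ → E} {w : ℂ} (h : u =ᶠ[nhds w] v) :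
    dbar u w = dbar v w := by
  simp only [dbar, h.fderiv_eq]

theorem continuous_dbar {u : ℂ → E} (hu : ContDiff ℝ 1 u) : Continuous (dbar u) := by
  have := hu.continuous_fderiv one_ne_zero
  unfold dbar
  fun_prop

theorem hasCompactSupport_dbar {u : ℂ → E} (hu : HasCompactSupport u) :
    HasCompactSupport (dbar u) :=
  (hu.fderiv ℝ).mono fun w hw h => hw (by simp [dbar, h])

theorem add_I_smul_eq_rotate (A : ℂ →L[ℝ] E) {e : ℂ} (he : ‖e‖ = 1) :
    A 1 + I • A I = e • (A e + I • A (I * e)) := by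
  have hA (z : ℂ) : A z = (z.re : ℂ) • A 1 + (z.im : ℂ) • A I := by
    conv_lhs => rw [← re_add_im z, ← mul_one (z.re : ℂ), ← real_smul, ← real_smul, map_add,
      map_smul, map_smul]
    simp only [coe_smul]
  have hsq : (e.re : ℂ) ^ 2 + (e.im : ℂ) ^ 2 = 1 := by
    rw [← ofReal_pow, ← ofReal_pow, ← ofReal_add, ← normSq_add_mul_I, re_add_im,
      normSq_eq_norm_sq, he, one_pow, ofReal_one]
  have h1 : e * (e.re - I * e.im) = 1 := by
    conv_lhs => enter [1]; rw [← re_add_im e]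
    linear_combination hsq - (e.im : ℂ) ^ 2 * I_sq
  rw [hA e, hA (I * e)]
  simp only [I_mul_re, I_mul_im, ofReal_neg]
  have h2 : e * (e.im + I * e.re) = I := by linear_combination I * h1 + e * e.im * I_sq
  calc A 1 + I • A I = (e * (e.re - I * e.im)) • A 1 + (e * (e.im + I * e.re)) • A I := by
        rw [h1, h2, one_smul]
    _ = _ := by module

theorem polarCoord_smul_dbar (u : ℂ → E) (z : ℂ) {p : ℝ × ℝ} (hp : p.1 ≠ 0) :
    p.1 • ((Complex.polarCoord.symm p)⁻¹ • dbar u (Complex.polarCoord.symm p + z)) =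
      (1 / 2 : ℂ) • (fderiv ℝ u (circleMap z p.1 p.2) (exp (p.2 * I)) +
        I • fderiv ℝ u (circleMap z p.1 p.2) (I * exp (p.2 * I))) := by
  have hr : (p.1 : ℂ) ≠ 0 := ofReal_ne_zero.2 hp
  have hsymm : Complex.polarCoord.symm p = p.1 * exp (p.2 * I) := by
    rw [Complex.polarCoord_symm_apply, exp_mul_I, ofReal_cos, ofReal_sin]
  rw [dbar, add_I_smul_eq_rotate _ (norm_exp_ofReal_mul_I p.2), hsymm, add_comm _ z, ← coe_smul]
  simp only [smul_smul, circleMap]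
  congr 1
  field_simp

variable [CompleteSpace E]

theorem integral_Ioi_fderiv_circleMap {u : ℂ → E} (hu : ContDiff ℝ 1 u)
    (hc : HasCompactSupport u) (z : ℂ) (θ : ℝ) :
    ∫ r in Ioi (0 : ℝ), fderiv ℝ u (circleMap z r θ) (exp (θ * I)) = -u z := by
  obtain ⟨R, hR⟩ := exists_forall_circleMap_notMem hc.isCompact.isBounded z
  have hderiv (r : ℝ) : HasDerivAt (fun r : ℝ => u (circleMap z r θ))
      (fderiv ℝ u (circleMap z r θ) (exp (θ * I))) r := by
    have hray : HasDerivAt (fun r : ℝ => circleMap z r θ) (exp (θ * I)) r := by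
      simpa [circleMap] using
        ((hasDerivAt_id r).ofReal_comp.mul_const (exp (θ * I))).const_add z
    exact ((hu.differentiable one_ne_zero) _).hasFDerivAt.comp_hasDerivAt r hray
  have hcont : Continuous fun r : ℝ => fderiv ℝ u (circleMap z r θ) (exp (θ * I)) := by
    have := hu.continuous_fderiv one_ne_zero
    unfold circleMap
    fun_prop
  have hzero : ∀ r, R < r → fderiv ℝ u (circleMap z r θ) = 0 := fun r hr =>
    fderiv_of_notMem_tsupport ℝ (hR r hr θ)
  have hint : IntegrableOn (fun r : ℝ => fderiv ℝ u (circleMap z r θ) (exp (θ * I))) (Ioi 0) := by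
    refine IntegrableOn.of_forall_sdiff_eq_zero
      (hcont.continuousOn.integrableOn_compact (isCompact_Icc (a := 0) (b := R)))
      measurableSet_Ioi fun r hr => ?_
    rw [hzero r (not_le.1 fun h => hr.2 ⟨(mem_Ioi.1 hr.1).le, h⟩), _root_.zero_apply]
  have hlim : Tendsto (fun r : ℝ => u (circleMap z r θ)) atTop (nhds 0) :=
    tendsto_const_nhds.congr' <| (eventually_gt_atTop R).mono fun r hr =>
      (image_eq_zero_of_notMem_tsupport (hR r hr θ)).symm
  simpa using integral_Ioi_of_hasDerivAt_of_tendsto' (fun r _ => hderiv r) hint hlim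

theorem integral_fderiv_circleMap_tangent {u : ℂ → E} (hu : ContDiff ℝ 1 u) (z : ℂ) {r : ℝ}
    (hr : r ≠ 0) : ∫ θ in Ioo (-π) π, fderiv ℝ u (circleMap z r θ) (I * exp (θ * I)) = 0 := by
  have hcont : Continuous fun θ : ℝ => fderiv ℝ u (circleMap z r θ) (I * exp (θ * I)) := by
    have := hu.continuous_fderiv one_ne_zero
    unfold circleMap
    fun_prop
  have hderiv (θ : ℝ) : HasDerivAt (fun θ : ℝ => u (circleMap z r θ))
      (r • fderiv ℝ u (circleMap z r θ) (I * exp (θ * I))) θ := by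
    have h := ((hu.differentiable one_ne_zero) _).hasFDerivAt.comp_hasDerivAt θ
      (hasDerivAt_circleMap z r θ)
    rwa [circleMap_zero, mul_assoc, mul_comm (exp _), ← real_smul, map_smul] at h
  have hint := intervalIntegral.integral_eq_sub_of_hasDerivAt
    (fun θ _ => hderiv θ) ((hcont.const_smul r).intervalIntegrable (-π) π)
  have hends : circleMap z r π = circleMap z r (-π) := by
    rw [← periodic_circleMap z r (-π)]; congr 1; ring
  rw [hends, sub_self, intervalIntegral.integral_smul, smul_eq_zero_iff_right hr,
    intervalIntegral.integral_of_le (by linarith [Real.pi_pos]), integral_Ioc_eq_integral_Ioo]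
    at hint
  exact hint

/-- **Cauchy–Pompeiu formula**. In polar coordinates centred at `z` the integrand splits into a
radial derivative, whose integral is `-u z` on every ray, and an angular one, whose integral
vanishes on every circle. -/
theorem integral_inv_sub_smul_dbar {u : ℂ → E} (hu : ContDiff ℝ 1 u) (hc : HasCompactSupport u)
    (z : ℂ) : ∫ w, (w - z)⁻¹ • dbar u w = -(π : ℂ) • u z := by
  have := hu.continuous_fderiv one_ne_zero
  obtain ⟨R, hR⟩ := exists_forall_circleMap_notMem hc.isCompact.isBounded z
  have hzero (r : ℝ) (hr : R < r) (θ : ℝ) : fderiv ℝ u (circleMap z r θ) = 0 :=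
    fderiv_of_notMem_tsupport ℝ (hR r hr θ)
  let radial : ℝ × ℝ → E := fun p => fderiv ℝ u (circleMap z p.1 p.2) (exp (p.2 * I))
  let angular : ℝ × ℝ → E := fun p => fderiv ℝ u (circleMap z p.1 p.2) (I * exp (p.2 * I))
  have hradial : IntegrableOn radial polarCoord.target :=
    integrableOn_polarCoord_target (by unfold radial circleMap; fun_prop) (R := R)
      fun p hp => by simp [radial, hzero p.1 hp]
  have hangular : IntegrableOn angular polarCoord.target :=
    integrableOn_polarCoord_target (by unfold angular circleMap; fun_prop) (R := R)
      fun p hp => by simp [angular, hzero p.1 hp]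
  have hradial_integral : ∫ p in polarCoord.target, radial p = -(2 * π : ℂ) • u z := by
    rw [IntegrableOn, polarCoord_target, Measure.volume_eq_prod, ← Measure.prod_restrict] at hradial
    rw [polarCoord_target, Measure.volume_eq_prod, ← Measure.prod_restrict,
      integral_prod_symm _ hradial]
    simp only [radial, integral_Ioi_fderiv_circleMap hu hc]
    rw [setIntegral_const, Real.volume_real_Ioo_of_le (by linarith [Real.pi_pos]), ← coe_smul]
    push_cast
    module
  have hangular_integral : ∫ p in polarCoord.target, angular p = 0 := by
    rw [polarCoord_target, Measure.volume_eq_prod] at hangular ⊢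
    rw [setIntegral_prod _ hangular, setIntegral_congr_fun measurableSet_Ioi fun r hr =>
      integral_fderiv_circleMap_tangent hu z (ne_of_gt hr), integral_zero]
  calc ∫ w, (w - z)⁻¹ • dbar u w = ∫ w, w⁻¹ • dbar u (w + z) := by
        simpa using (integral_add_right_eq_self (fun w => (w - z)⁻¹ • dbar u w) z).symm
    _ = ∫ p in polarCoord.target, (1 / 2 : ℂ) • (radial p + I • angular p) := by
        rw [← Complex.integral_comp_polarCoord_symm]
        exact setIntegral_congr_fun polarCoord.open_target.measurableSet fun p hp =>
          polarCoord_smul_dbar u z (ne_of_gt hp.1)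
    _ = (1 / 2 : ℂ) • (-(2 * π : ℂ) • u z + I • (0 : E)) := by
        rw [integral_smul, integral_add (g := fun p => I • angular p) hradial
          (hangular.smul I), integral_smul, hradial_integral, hangular_integral]
    _ = -(π : ℂ) • u z := by module

theorem exists_contDiff_hasCompactSupport_eventuallyEq {E F : Type*}
    [NormedAddCommGroup E] [NormedSpace ℝ E] [FiniteDimensional ℝ E]
    [NormedAddCommGroup F] [NormedSpace ℝ F] {n : ℕ∞} {h : E → F} {K U : Set E}
    (hh : ContDiffOn ℝ n h U) (hK : IsCompact K) (hU : IsOpen U) (hKU : K ⊆ U) :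
    ∃ u : E → F, ContDiff ℝ n u ∧ HasCompactSupport u ∧ u =ᶠ[𝓝ˢ K] h := by
  obtain ⟨L, hL, hKL, hLU⟩ := exists_compact_between hK hU hKU
  obtain ⟨χ, hχ_one, hχ_zero, -⟩ := exists_contMDiffMap_one_nhds_of_subset_interior (n := n)
    (modelWithCornersSelf ℝ E) hK.isClosed hKL
  have hχ : ContDiff ℝ n χ := χ.contMDiff.contDiff
  have hχL : tsupport χ ⊆ L :=
    closure_minimal (fun x hx => by_contra fun hxL => hx (hχ_zero x hxL)) hL.isClosed
  refine ⟨fun x => χ x • h x, contDiff_iff_contDiffAt.2 fun x => ?_,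
    (HasCompactSupport.of_support_subset_isCompact hL
      ((subset_tsupport χ).trans hχL)).smul_right, ?_⟩
  · by_cases hx : x ∈ tsupport χ
    · exact hχ.contDiffAt.smul (hh.contDiffAt (hU.mem_nhds (hLU (hχL hx))))
    · refine contDiffAt_const (c := 0) |>.congr_of_eventuallyEq ?_
      filter_upwards [notMem_tsupport_iff_eventuallyEq.1 hx] with y hy
      rw [hy, Pi.zero_apply, zero_smul]
  · filter_upwards [hχ_one] with x hx
    rw [hx, one_smul]

theorem exists_integral_inv_sub_smul_eq {E : Type*} [NormedAddCommGroup E]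
    [NormedSpace ℂ E] [CompleteSpace E] {h : ℂ → E} {K U : Set ℂ} (hh : DifferentiableOn ℂ h U)
    (hK : IsCompact K) (hU : IsOpen U) (hKU : K ⊆ U) :
    ∃ v : ℂ → E, Continuous v ∧ HasCompactSupport v ∧ Disjoint (tsupport v) K ∧
      ∀ z ∈ K, ∫ w, (w - z)⁻¹ • v w = h z := by
  obtain ⟨u, hu, hu_supp, huh⟩ := exists_contDiff_hasCompactSupport_eventuallyEq (n := 1)
    ((hh.contDiffOn hU).restrict_scalars ℝ) hK hU hKU
  have hdbar (z : ℂ) (hz : z ∈ K) : dbar u =ᶠ[𝓝 z] 0 := by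
    filter_upwards [(huh.filter_mono (nhds_le_nhdsSet hz)).eventually_nhds,
      hU.mem_nhds (hKU hz)] with w hw hwU
    rw [dbar_congr hw]
    exact dbar_eq_zero_of_differentiableAt (hh.differentiableAt (hU.mem_nhds hwU))
  refine ⟨fun w => (-(π : ℂ)⁻¹) • dbar u w, (continuous_dbar hu).const_smul _,
    (hasCompactSupport_dbar hu_supp).smul_left, ?_, fun z hz => ?_⟩
  · refine disjoint_right.2 fun z hz => notMem_tsupport_iff_eventuallyEq.2 ?_
    filter_upwards [hdbar z hz] with w hw
    rw [hw, Pi.zero_apply, smul_zero]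
  · simp_rw [smul_comm _ (-(π : ℂ)⁻¹)]
    rw [integral_smul, integral_inv_sub_smul_dbar hu hu_supp, huh.self_of_nhdsSet hz, smul_smul,
      neg_mul_neg, inv_mul_cancel₀ (ofReal_ne_zero.2 Real.pi_ne_zero), one_smul]

end DBar

section ClosedSubalgebra

open MeasureTheory

theorem integral_mem_of_isClosed {X 𝕜 E : Type*} [MeasurableSpace X] {μ : Measure X} [RCLike 𝕜]
    [NormedAddCommGroup E] [NormedSpace ℝ E] [NormedSpace 𝕜 E] [CompleteSpace E]
    {M : Submodule 𝕜 E} (hM : IsClosed (M : Set E)) {f : X → E} (hf : ∀ x, f x ∈ M) :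
    ∫ x, f x ∂μ ∈ M := by
  by_cases hint : Integrable f μ
  · have : IsClosed (M : Set E) := hM
    have hzero (x : X) : M.mkQL (f x) = 0 := (Submodule.Quotient.mk_eq_zero M).2 (hf x)
    rw [← Submodule.Quotient.mk_eq_zero, ← Submodule.mkQ_apply, ← Submodule.mkQL_apply,
      ← M.mkQL.integral_comp_comm hint, integral_eq_zero_of_ae (.of_forall hzero)]
  · rw [integral_undef hint]
    exact M.zero_mem

variable {A : Type*} [NormedRing A] [NormedAlgebra ℂ A] (S : Subalgebra ℂ A) (a : S)

theorem resolvent_mem_of_notMem_spectrum {w : ℂ} (hw : w ∉ spectrum ℂ a) :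
    resolvent (a : A) w ∈ S := by
  obtain ⟨u, hu⟩ := spectrum.notMem_iff.1 hw
  have huA : algebraMap ℂ A w - a = Units.map (S.val : S →* A) u := congrArg S.val hu.symm
  rw [resolvent, huA, Ring.inverse_unit]
  exact (u⁻¹ : Sˣ).val.2

variable [CompleteSpace A] [hS : IsClosed (S : Set A)]

theorem spectrum_subset_of_forall_isHole
    (h : ∀ C, IsHole (spectrum ℂ (a : A)) C → ¬ C ⊆ spectrum ℂ a) :
    spectrum ℂ a ⊆ spectrum ℂ (a : A) := by
  intro w hw
  by_contra hwA
  refine h (connectedComponentIn (spectrum ℂ (a : A))ᶜ w)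
    ⟨⟨w, hwA, rfl⟩, Subalgebra.spectrum_isBounded_connectedComponentIn S a hw⟩ fun p hp => ?_
  rw [Subalgebra.spectrum_sUnion_connectedComponentIn (𝕜 := ℂ) S a]
  exact Or.inr (mem_biUnion (show w ∈ _ \ _ from ⟨hw, hwA⟩) hp)

theorem integral_smul_resolvent_mem (h : spectrum ℂ a ⊆ spectrum ℂ (a : A)) {v : ℂ → ℂ}
    (hv : Disjoint (tsupport v) (spectrum ℂ (a : A))) :
    ∫ w, v w • resolvent (a : A) w ∈ S := by
  refine integral_mem_of_isClosed (M := Subalgebra.toSubmodule S) hS fun w => ?_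
  by_cases hw : w ∈ spectrum ℂ (a : A)
  · simp [image_eq_zero_of_notMem_tsupport (disjoint_right.1 hv hw)]
  · exact S.smul_mem (resolvent_mem_of_notMem_spectrum S a fun hwS => hw (h hwS)) _

theorem integrable_smul_resolvent (a : A) {v : ℂ → ℂ} (hv : Continuous v)
    (hv_supp : HasCompactSupport v) (hva : Disjoint (tsupport v) (spectrum ℂ a)) :
    Integrable fun w => v w • resolvent a w := by
  refine Continuous.integrable_of_hasCompactSupport (continuous_iff_continuousAt.2 fun w => ?_)
    hv_supp.smul_right
  by_cases hw : w ∈ tsupport v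
  · have hres : w ∈ resolventSet ℂ a := spectrum.notMem_iff.1 (disjoint_left.1 hva hw)
    exact hv.continuousAt.smul (spectrum.hasDerivAt_resolvent_const_left hres).continuousAt
  · refine continuousAt_const.congr (f := fun _ => (0 : A)) ?_
    filter_upwards [notMem_tsupport_iff_eventuallyEq.1 hw] with y hy
    rw [hy, Pi.zero_apply, zero_smul]

end ClosedSubalgebra

theorem resolvent_continuousMap_apply {X : Type*} [TopologicalSpace X] (a : C(X, ℂ)) {w : ℂ}
    (hw : w ∉ spectrum ℂ a) (x : X) : resolvent a w x = (w - a x)⁻¹ := by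
  have h : (algebraMap ℂ C(X, ℂ) w - a) * resolvent a w = 1 :=
    Ring.mul_inverse_cancel _ (spectrum.notMem_iff.1 hw)
  exact eq_inv_of_mul_eq_one_right (congrArg (fun f : C(X, ℂ) => f x) h)

/-- The algebra of restrictions to `K` of the functions that are holomorphic on `Ω`. When `K = Ω`
this is `H(Ω)` itself. -/
def holRestrictions (Ω K : Set ℂ) : Subalgebra ℂ C(K, ℂ) where
  carrier := {g | ∃ F : ℂ → ℂ, DifferentiableOn ℂ F Ω ∧ ∀ z : K, g z = F z}
  mul_mem' := by
    rintro _ _ ⟨F₁, hF₁, h₁⟩ ⟨F₂, hF₂, h₂⟩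
    exact ⟨fun z => F₁ z * F₂ z, hF₁.mul hF₂, fun z => by rw [ContinuousMap.mul_apply, h₁, h₂]⟩
  add_mem' := by
    rintro _ _ ⟨F₁, hF₁, h₁⟩ ⟨F₂, hF₂, h₂⟩
    exact ⟨fun z => F₁ z + F₂ z, hF₁.add hF₂, fun z => by rw [ContinuousMap.add_apply, h₁, h₂]⟩
  algebraMap_mem' r := ⟨fun _ => r, differentiableOn_const r, fun _ => rfl⟩

namespace OmegaConvex

variable {Ω K : Set ℂ}

theorem spectrum_holRestrictions_subset [CompactSpace K] (hKΩ : K ⊆ Ω) (hconv : OmegaConvex Ω K)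
    (a : (holRestrictions Ω K).topologicalClosure)
    (ha : ∀ z : K, (a : C(K, ℂ)) z = z) :
    spectrum ℂ a ⊆ spectrum ℂ (a : C(K, ℂ)) := by
  have : IsClosed ((holRestrictions Ω K).topologicalClosure : Set C(K, ℂ)) :=
    Subalgebra.isClosed_topologicalClosure _
  have hspec : spectrum ℂ (a : C(K, ℂ)) = K := by
    rw [ContinuousMap.spectrum_eq_range, funext ha, Subtype.range_coe]
  refine spectrum_subset_of_forall_isHole _ a fun C hC hCa => ?_
  obtain ⟨p, hpC, hpΩ⟩ := hconv C (hspec ▸ hC)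
  have hne (z : ℂ) (hz : z ∈ Ω) : p - z ≠ 0 := sub_ne_zero.2 fun h => hpΩ (h ▸ hz)
  let b : C(K, ℂ) := ⟨fun z => (p - z)⁻¹,
    (continuous_const.sub continuous_subtype_val).inv₀ fun z => hne z (hKΩ z.2)⟩
  have hb : b ∈ (holRestrictions Ω K).topologicalClosure :=
    Subalgebra.le_topologicalClosure _
      ⟨fun z => (p - z)⁻¹, (differentiableOn_id.const_sub p).inv hne, fun _ => rfl⟩
  refine hCa hpC (IsUnit.of_mul_eq_one ⟨b, hb⟩ (Subtype.ext (ContinuousMap.ext fun z => ?_)))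
  change (p - (a : C(K, ℂ)) z) * (p - z)⁻¹ = 1
  rw [ha, mul_inv_cancel₀ (hne z (hKΩ z.2))]

/-- **Runge's theorem**. The approximants come from the Cauchy transform `h = ∫ v w • (w - ·)⁻¹`,
whose integrand takes its values in the closure of the restrictions from `H(Ω)`. -/
theorem exists_forall_norm_sub_lt (hK : IsCompact K) (hKΩ : K ⊆ Ω) (hconv : OmegaConvex Ω K)
    {U : Set ℂ} (hU : IsOpen U) (hKU : K ⊆ U) {h : ℂ → ℂ} (hh : DifferentiableOn ℂ h U) {ε : ℝ}
    (hε : 0 < ε) : ∃ F : ℂ → ℂ, DifferentiableOn ℂ F Ω ∧ ∀ z ∈ K, ‖F z - h z‖ < ε := by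
  have : CompactSpace K := isCompact_iff_compactSpace.1 hK
  set S := (holRestrictions Ω K).topologicalClosure
  have : IsClosed (S : Set C(K, ℂ)) := Subalgebra.isClosed_topologicalClosure _
  let a : S := ⟨⟨Subtype.val, continuous_subtype_val⟩,
    Subalgebra.le_topologicalClosure _ ⟨id, differentiableOn_id, fun _ => rfl⟩⟩
  have hspec : spectrum ℂ (a : C(K, ℂ)) = K := by
    rw [ContinuousMap.spectrum_eq_range]
    exact Subtype.range_coe
  obtain ⟨v, hv, hv_supp, hvK, hvh⟩ := exists_integral_inv_sub_smul_eq hh hK hU hKU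
  rw [← hspec] at hvK
  set g : C(K, ℂ) := ∫ w, v w • resolvent (a : C(K, ℂ)) w
  have hgS : g ∈ S := integral_smul_resolvent_mem S a
    (hconv.spectrum_holRestrictions_subset hKΩ a fun _ => rfl) hvK
  have hg (z : K) : g z = h z := by
    have heval := (ContinuousMap.evalCLM ℂ z).integral_comp_comm
      (integrable_smul_resolvent (a : C(K, ℂ)) hv hv_supp hvK)
    refine heval.symm.trans
      ((MeasureTheory.integral_congr_ae (.of_forall fun w => ?_)).trans (hvh z z.2))
    by_cases hw : w ∈ spectrum ℂ (a : C(K, ℂ))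
    · simp [image_eq_zero_of_notMem_tsupport (disjoint_right.1 hvK hw)]
    · change v w * resolvent (a : C(K, ℂ)) w z = (w - z)⁻¹ * v w
      rw [resolvent_continuousMap_apply _ hw, mul_comm]
      rfl
  obtain ⟨b, ⟨F, hF, hbF⟩, hb⟩ := Metric.mem_closure_iff.1 hgS ε hε
  refine ⟨F, hF, fun z hz => ?_⟩
  have := (ContinuousMap.dist_lt_iff hε).1 hb ⟨z, hz⟩
  rwa [hg, hbF, dist_comm, dist_eq_norm] at this

end OmegaConvex

section Holes

section Topology

variable {X : Type*} [TopologicalSpace X] {K T V W : Set X}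

theorem subset_interior_of_disjoint_frontier (hT : IsPreconnected T) (hTV : (T ∩ V).Nonempty)
    (hfront : Disjoint T (frontier V)) : T ⊆ interior V := by
  have hmem (x : X) (hx : x ∈ T) (hxV : x ∈ closure V) : x ∈ interior V :=
    by_contra fun h => disjoint_left.1 hfront hx ⟨hxV, h⟩
  refine hT.subset_left_of_subset_union isOpen_interior isClosed_closure.isOpen_compl
    (disjoint_compl_right.mono_left (interior_subset.trans subset_closure))
    (fun x hx => or_iff_not_imp_right.2 fun h => hmem x hx (not_not.1 h)) ?_
  obtain ⟨x, hxT, hxV⟩ := hTV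
  exact ⟨x, hxT, hmem x hxT (subset_closure hxV)⟩

theorem frontier_connectedComponentIn_subset_compl [LocallyConnectedSpace X] (hW : IsOpen W)
    (x : X) : frontier (connectedComponentIn W x) ⊆ Wᶜ := by
  intro y hy hyW
  rw [hW.connectedComponentIn.frontier_eq] at hy
  obtain ⟨z, hzy, hzx⟩ := mem_closure_iff.1 hy.1 _ hW.connectedComponentIn
    (mem_connectedComponentIn hyW)
  refine hy.2 ?_
  rw [connectedComponentIn_eq hzx, ← connectedComponentIn_eq hzy]
  exact mem_connectedComponentIn hyW

theorem connectedComponentIn_compl_eq (hV : IsPreconnected V) (hVK : Disjoint V K)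
    (hfront : frontier V ⊆ K) {x : X} (hx : x ∈ V) : connectedComponentIn Kᶜ x = V := by
  refine (Subset.trans ?_ interior_subset).antisymm
    (hV.subset_connectedComponentIn hx (subset_compl_iff_disjoint_right.2 hVK))
  refine subset_interior_of_disjoint_frontier isPreconnected_connectedComponentIn
    ⟨x, mem_connectedComponentIn (disjoint_left.1 hVK hx), hx⟩ ?_
  exact (subset_compl_iff_disjoint_right.1 (connectedComponentIn_subset _ _)).mono_right hfront

end Topology

variable {Ω K C : Set ℂ}

namespace IsHole

theorem disjoint (hC : IsHole K C) : Disjoint C K := by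
  obtain ⟨⟨z, -, rfl⟩, -⟩ := hC
  exact subset_compl_iff_disjoint_right.1 (connectedComponentIn_subset _ _)

theorem nonempty (hC : IsHole K C) : C.Nonempty := by
  obtain ⟨⟨z, hz, rfl⟩, -⟩ := hC
  exact connectedComponentIn_nonempty_iff.2 hz

theorem isPreconnected (hC : IsHole K C) : IsPreconnected C := by
  obtain ⟨⟨z, -, rfl⟩, -⟩ := hC
  exact isPreconnected_connectedComponentIn

theorem subset_of_isPreconnected (hC : IsHole K C) {T : Set ℂ} (hT : IsPreconnected T)
    (hTK : Disjoint T K) (hTC : (T ∩ C).Nonempty) : T ⊆ C := by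
  obtain ⟨⟨z, -, rfl⟩, -⟩ := hC
  obtain ⟨x, hxT, hxC⟩ := hTC
  rw [connectedComponentIn_eq hxC]
  exact hT.subset_connectedComponentIn hxT (subset_compl_iff_disjoint_right.2 hTK)

theorem frontier_subset (hC : IsHole K C) (hK : IsClosed K) : frontier C ⊆ K := by
  obtain ⟨⟨z, -, rfl⟩, -⟩ := hC
  simpa only [compl_compl] using frontier_connectedComponentIn_subset_compl hK.isOpen_compl z

theorem norm_le_of_forall_mem (hC : IsHole K C) (hK : IsClosed K) (hKΩ : K ⊆ Ω) (hCΩ : C ⊆ Ω)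
    {F : ℂ → ℂ} (hF : DifferentiableOn ℂ F Ω) {M : ℝ} (hM : ∀ z ∈ K, ‖F z‖ ≤ M) {z : ℂ}
    (hz : z ∈ C) : ‖F z‖ ≤ M := by
  have hfront := hC.frontier_subset hK
  refine Complex.norm_le_of_forall_mem_frontier_norm_le hC.2 (hF.mono ?_).diffContOnCl
    (fun w hw => hM w (hfront hw)) (subset_closure hz)
  rw [closure_eq_self_union_frontier]
  exact union_subset hCΩ (hfront.trans hKΩ)

end IsHole

theorem isHole_of_frontier_subset (hne : C.Nonempty) (hconn : IsPreconnected C)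
    (hbdd : IsBounded C) (hCK : Disjoint C K) (hfront : frontier C ⊆ K) : IsHole K C := by
  obtain ⟨z, hz⟩ := hne
  exact ⟨⟨z, disjoint_left.1 hCK hz, (connectedComponentIn_compl_eq hconn hCK hfront hz).symm⟩,
    hbdd⟩

theorem omegaConvex_of_forall_exists_lt_norm (hK : IsClosed K) (hKΩ : K ⊆ Ω)
    (h : ∀ z ∈ Ω \ K, ∃ F : ℂ → ℂ, DifferentiableOn ℂ F Ω ∧ ∃ M, (∀ w ∈ K, ‖F w‖ ≤ M) ∧ M < ‖F z‖) :
    OmegaConvex Ω K := by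
  intro C hC
  by_contra hCΩ
  rw [inter_compl_nonempty_iff, not_not] at hCΩ
  obtain ⟨z, hz⟩ := hC.nonempty
  obtain ⟨F, hF, M, hM, hlt⟩ := h z ⟨hCΩ hz, disjoint_left.1 hC.disjoint hz⟩
  exact hlt.not_ge (hC.norm_le_of_forall_mem hK hKΩ hCΩ hF hM hz)

theorem omegaConvex_closedBall_diff_thickening (Ω : Set ℂ) (R : ℝ) {δ : ℝ} (hδ : 0 < δ) :
    OmegaConvex Ω (closedBall 0 R \ thickening δ Ωᶜ) := by
  have hsub : closedBall 0 R \ thickening δ Ωᶜ ⊆ Ω := fun z hz =>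
    by_contra fun hzΩ => hz.2 (self_subset_thickening hδ _ hzΩ)
  refine omegaConvex_of_forall_exists_lt_norm (isClosed_closedBall.sdiff isOpen_thickening) hsub ?_
  rintro z ⟨hzΩ, hz⟩
  by_cases hzR : z ∈ closedBall 0 R
  · obtain ⟨p, hp, hzp⟩ := mem_thickening_iff.1 (not_not.1 fun h => hz ⟨hzR, h⟩)
    have hne (w : ℂ) (hw : w ∈ Ω) : w - p ≠ 0 := sub_ne_zero.2 fun h => hp (h ▸ hw)
    refine ⟨fun w => (w - p)⁻¹, (differentiableOn_id.sub_const p).inv hne, δ⁻¹, fun w hw => ?_, ?_⟩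
    · have hwp : δ ≤ ‖w - p‖ := by
        rw [← dist_eq_norm]
        exact not_lt.1 fun h => hw.2 (mem_thickening_iff.2 ⟨p, hp, h⟩)
      rw [norm_inv]
      gcongr
    · rw [norm_inv]
      rw [dist_eq_norm] at hzp
      exact (inv_lt_inv₀ hδ (norm_pos_iff.2 (hne z hzΩ))).2 hzp
  · exact ⟨id, differentiableOn_id, R, fun w hw => mem_closedBall_zero_iff.1 hw.1,
      not_le.1 fun h => hzR (mem_closedBall_zero_iff.2 h)⟩

theorem exists_isCompact_omegaConvex_superset (hΩ : IsOpen Ω) (hK : IsCompact K) (hKΩ : K ⊆ Ω) :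
    ∃ L, IsCompact L ∧ K ⊆ L ∧ L ⊆ Ω ∧ OmegaConvex Ω L := by
  obtain ⟨R, hR⟩ := hK.isBounded.subset_closedBall 0
  obtain ⟨δ, hδ, hδΩ⟩ := hK.exists_thickening_subset_open hΩ hKΩ
  refine ⟨closedBall 0 R \ thickening δ Ωᶜ, (isCompact_closedBall 0 R).diff isOpen_thickening,
    fun z hz => ⟨hR hz, fun hzδ => ?_⟩,
    fun z hz => by_contra fun hzΩ => hz.2 (self_subset_thickening hδ _ hzΩ),
    omegaConvex_closedBall_diff_thickening Ω R hδ⟩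
  obtain ⟨p, hp, hzp⟩ := mem_thickening_iff.1 hzδ
  exact hp (hδΩ (mem_thickening_iff.2 ⟨z, hz, by rwa [dist_comm]⟩))

end Holes

section Univalent

open scoped Topology

theorem not_eventually_eq_of_injOn {X Y : Type*} [TopologicalSpace X] {z : X} [(𝓝[≠] z).NeBot]
    {U : Set X} {ψ : X → Y} (hU : U ∈ 𝓝 z) (hinj : InjOn ψ U) :
    ¬∀ᶠ w in 𝓝 z, ψ w = ψ z := by
  intro hconst
  have hnear : ∀ᶠ w in 𝓝[≠] z, ψ w = ψ z ∧ w ∈ U := nhdsWithin_le_nhds (hconst.and hU)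
  obtain ⟨w, ⟨hw, hwU⟩, hwz⟩ := (hnear.and self_mem_nhdsWithin).exists
  exact hwz (hinj hwU (mem_of_mem_nhds hU) hw)

variable {U : Set ℂ} {ψ : ℂ → ℂ}

theorem nhds_le_map_nhds_of_injOn (hψ : DifferentiableOn ℂ ψ U) (hinj : InjOn ψ U) {z : ℂ}
    (hz : U ∈ 𝓝 z) : 𝓝 (ψ z) ≤ map ψ (𝓝 z) :=
  (hψ.analyticAt hz).eventually_constant_or_nhds_le_map_nhds.resolve_left
    (not_eventually_eq_of_injOn hz hinj)

theorem eventually_deriv_ne_zero_of_injOn (hψ : DifferentiableOn ℂ ψ U) (hinj : InjOn ψ U) {z : ℂ}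
    (hz : U ∈ 𝓝 z) : ∀ᶠ w in 𝓝[≠] z, deriv ψ w ≠ 0 := by
  refine (hψ.analyticAt hz).deriv.eventually_eq_zero_or_eventually_ne_zero.resolve_left fun h₀ =>
    not_eventually_eq_of_injOn hz hinj ?_
  obtain ⟨r, hr, hball⟩ := Metric.mem_nhds_iff.1 (inter_mem h₀ hz)
  filter_upwards [ball_mem_nhds z hr] with w hw
  exact isOpen_ball.is_const_of_deriv_eq_zero (convex_ball z r).isPreconnected
    (hψ.mono fun x hx => (hball hx).2) (fun x hx => (hball hx).1) hw (mem_ball_self hr)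

theorem isOpenMap_domRestrict_of_injOn (hU : IsOpen U) (hψ : DifferentiableOn ℂ ψ U)
    (hinj : InjOn ψ U) : IsOpenMap (U.domRestrict ψ) := by
  refine IsOpenMap.of_nhds_le fun z => ?_
  rw [domRestrict_eq, ← map_map, hU.isOpenEmbedding_subtypeVal.map_nhds_eq]
  exact nhds_le_map_nhds_of_injOn hψ hinj (hU.mem_nhds z.2)

theorem exists_openPartialHomeomorph_of_injOn (hU : IsOpen U) (hψ : DifferentiableOn ℂ ψ U)
    (hinj : InjOn ψ U) : ∃ e : OpenPartialHomeomorph ℂ ℂ, e.source = U ∧ e = ψ := by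
  have hopen := isOpenMap_domRestrict_of_injOn hU hψ hinj
  have hopen_target : IsOpen (ψ '' U) := range_domRestrict ψ U ▸ hopen.isOpen_range
  exact ⟨{ toPartialHomeomorph :=
            .ofContinuousOpenRestrict (hinj.toPartialEquiv ψ U) hψ.continuousOn hopen
           open_source := hU
           open_target := hopen_target }, rfl, rfl⟩

/- Away from the isolated critical points the inverse function theorem applies; at a critical
point the inverse is continuous, so the singularity is removable. -/
theorem differentiableOn_symm_of_differentiableOn (e : OpenPartialHomeomorph ℂ ℂ)
    (he : DifferentiableOn ℂ e e.source) : DifferentiableOn ℂ e.symm e.target := by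
  intro w hw
  have hsource : e.source ∈ 𝓝 (e.symm w) := e.open_source.mem_nhds (e.map_target hw)
  have htarget : ∀ᶠ y in 𝓝[≠] w, y ∈ e.target :=
    nhdsWithin_le_nhds (e.open_target.mem_nhds hw)
  have htendsto : Tendsto e.symm (𝓝[≠] w) (𝓝[≠] (e.symm w)) :=
    tendsto_nhdsWithin_iff.2 ⟨(e.continuousAt_symm hw).mono_left nhdsWithin_le_nhds, by
      filter_upwards [htarget, self_mem_nhdsWithin] with y hy hyw heq
      exact hyw (e.symm.injOn hy hw heq)⟩
  refine (Complex.analyticAt_of_differentiable_on_punctured_nhds_of_continuousAt ?_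
    (e.continuousAt_symm hw)).differentiableAt.differentiableWithinAt
  filter_upwards [htarget,
    htendsto.eventually (eventually_deriv_ne_zero_of_injOn he e.injOn hsource)] with y hy hderiv
  exact (e.hasDerivAt_symm hy hderiv (he.differentiableAt
    (e.open_source.mem_nhds (e.map_target hy))).hasDerivAt).differentiableAt

end Univalent

section Necessity

open scoped Topology

theorem OmegaConvex.exists_forall_norm_lt_and_forall_eq {Ω K : Set ℂ} (hconv : OmegaConvex Ω K)
    (hK : IsCompact K) (hKΩ : K ⊆ Ω) {t : Finset ℂ} (ht : Disjoint ↑t K) (T : ℂ) {ε : ℝ}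
    (hε : 0 < ε) :
    ∃ q : ℂ → ℂ, DifferentiableOn ℂ q Ω ∧ (∀ z ∈ K, ‖q z‖ < ε) ∧ ∀ c ∈ t, q c = T := by
  let P : ℂ → ℂ := fun z => ∏ c ∈ t, (z - c)
  have hP : Differentiable ℂ P := by fun_prop
  have hPK : K ⊆ {z | P z ≠ 0} := fun z hz =>
    Finset.prod_ne_zero_iff.2 fun c hc h => disjoint_left.1 ht hc (sub_eq_zero.1 h ▸ hz)
  obtain ⟨D, hD⟩ := hK.exists_bound_of_continuousOn hP.continuous.continuousOn
  have hT : DifferentiableOn ℂ (fun z => T / P z) {z | P z ≠ 0} :=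
    (differentiableOn_const T).div hP.differentiableOn fun _ hz => hz
  obtain ⟨H, hH, happrox⟩ := OmegaConvex.exists_forall_norm_sub_lt hK hKΩ hconv
    (isOpen_ne_fun hP.continuous continuous_const) hPK hT (div_pos hε (by positivity : 0 < |D| + 1))
  refine ⟨fun z => T - P z * H z, (differentiableOn_const T).sub (hP.differentiableOn.mul hH),
    fun z hz => ?_, fun c hc => ?_⟩
  · calc ‖T - P z * H z‖ = ‖P z‖ * ‖H z - T / P z‖ := by
          rw [← norm_mul, mul_sub, mul_div_cancel₀ T (hPK hz), norm_sub_rev]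
      _ ≤ |D| * ‖H z - T / P z‖ := by gcongr; exact (hD z hz).trans (le_abs_self D)
      _ ≤ (|D| + 1) * ‖H z - T / P z‖ := by gcongr; exact (lt_add_one _).le
      _ < ε := (lt_div_iff₀' (by positivity)).1 (happrox z hz)
  · have hPc : P c = 0 := Finset.prod_eq_zero hc (sub_self c)
    simp only [hPc, zero_mul, sub_zero]

theorem UniversalFor.exists_ge_forall_norm_sub_add_lt {G K : Set ℂ} {φ : ℕ → ℂ → ℂ} {f q : ℂ → ℂ}
    (hf : UniversalFor G φ f) (hq : DifferentiableOn ℂ q G) (hKG : K ⊆ G) (hK : IsCompact K)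
    {ε : ℝ} (hε : 0 < ε) (A : ℝ) (N : ℕ) :
    ∃ n ≥ N, ∃ a : ℝ, A ≤ a ∧ ∀ z ∈ K, ‖f (φ n z) - (a + q z)‖ < ε := by
  obtain rfl | ⟨p, hp⟩ := K.eq_empty_or_nonempty
  · exact ⟨N, le_rfl, A, le_rfl, fun z hz => hz.elim⟩
  obtain ⟨a, hAa, ha⟩ := ((eventually_ge_atTop A).and ((Finset.range N).eventually_all.2
    fun m _ => eventually_ge_atTop (ε + ‖q p‖ + ‖f (φ m p)‖))).exists
  obtain ⟨n, hn⟩ := hf (fun z => a + q z) ((differentiableOn_const _).add hq) K hKG hK ε hε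
  refine ⟨n, not_lt.1 fun hnN => (hn p hp).not_ge ?_, a, hAa, hn⟩
  have htri : ‖(a : ℂ)‖ ≤ ‖(a : ℂ) + q p - f (φ n p)‖ + ‖f (φ n p)‖ + ‖q p‖ := by
    simpa only [sub_add_cancel, add_sub_cancel_right] using
      norm_sub_le_of_le (norm_add_le ((a : ℂ) + q p - f (φ n p)) (f (φ n p))) (le_refl ‖q p‖)
  rw [Complex.norm_real, norm_sub_rev] at htri
  linarith [le_abs_self a, ha n (Finset.mem_range.2 hnN), Real.norm_eq_abs a]

theorem exists_finset_forall_connectedComponentIn {X : Type*} [TopologicalSpace X]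
    [LocallyConnectedSpace X] {S W : Set X} (hS : IsCompact S) (hW : IsOpen W) (hSW : S ⊆ W) :
    ∃ t : Finset X, ↑t ⊆ W ∧ ∀ z, (connectedComponentIn W z ∩ S).Nonempty →
      ∃ c ∈ t, c ∈ connectedComponentIn W z := by
  obtain ⟨t, htS, hcover⟩ := hS.elim_nhds_subcover (connectedComponentIn W) fun x hx =>
    hW.connectedComponentIn.mem_nhds (mem_connectedComponentIn (hSW hx))
  refine ⟨t, fun c hc => hSW (htS c hc), fun z ⟨y, hyz, hyS⟩ => ?_⟩
  obtain ⟨c, hc, hyc⟩ := mem_iUnion₂.1 (hcover hyS)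
  rw [connectedComponentIn_eq hyz, ← connectedComponentIn_eq hyc]
  exact ⟨c, hc, mem_connectedComponentIn (hSW (htS c hc))⟩

theorem OmegaConvex.connectedComponentIn_inter_frontier_nonempty {G K O V : Set ℂ}
    (hconv : OmegaConvex G K) (hK : IsClosed K) (hO : IsOpen O) (hOG : O ⊆ G)
    (hVbdd : IsBounded V) (hVO : closure V ⊆ O) {z : ℂ} (hz : z ∈ V \ K) :
    (connectedComponentIn (O \ K) z ∩ frontier V).Nonempty := by
  set D := connectedComponentIn (O \ K) z
  have hzD : z ∈ D := mem_connectedComponentIn ⟨hVO (subset_closure hz.1), hz.2⟩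
  have hDOK : D ⊆ O \ K := connectedComponentIn_subset _ _
  by_contra hdisj
  rw [← not_disjoint_iff_nonempty_inter, not_not] at hdisj
  have hDV : D ⊆ V := (subset_interior_of_disjoint_frontier isPreconnected_connectedComponentIn
    ⟨z, hzD, hz.1⟩ hdisj).trans interior_subset
  have hfront : frontier D ⊆ K := fun x hx => by_contra fun hxK =>
    frontier_connectedComponentIn_subset_compl (hO.sdiff hK) z hx
      ⟨hVO (closure_mono hDV (frontier_subset_closure hx)), hxK⟩
  obtain ⟨x, hxD, hxG⟩ := hconv D <| isHole_of_frontier_subset ⟨z, hzD⟩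
    isPreconnected_connectedComponentIn (hVbdd.subset hDV)
    (disjoint_left.2 fun x hx => (hDOK hx).2) hfront
  exact hxG (hOG (hDOK hxD).1)

theorem IsHole.isHole_or_exists_image_connectedComponentIn_subset {X : Type*} [TopologicalSpace X]
    {e : OpenPartialHomeomorph X ℂ} {K V : Set X} {L C : Set ℂ} (hC : IsHole (e '' K ∪ L) C)
    (hclosed : IsClosed (e '' K ∪ L)) (hV : IsOpen V) (hKV : K ⊆ V) (hVe : V ⊆ e.source)
    (hL : Disjoint e.target L) :
    IsHole L C ∨ ∃ z ∈ V \ K, e '' connectedComponentIn (e.source \ K) z ⊆ C := by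
  have hfront : frontier C ⊆ e '' K ∪ L := hC.frontier_subset hclosed
  by_cases hmeet : ∃ x ∈ K, e x ∈ frontier C
  · obtain ⟨x, hxK, hxC⟩ := hmeet
    obtain ⟨_, ⟨z, hzV, rfl⟩, hzC⟩ := mem_closure_iff_nhds.1 (frontier_subset_closure hxC) _
      (e.image_mem_nhds (hVe (hKV hxK)) (hV.mem_nhds (hKV hxK)))
    have hzK : z ∉ K := fun h => disjoint_left.1 hC.disjoint hzC (.inl (mem_image_of_mem e h))
    have hsub : connectedComponentIn (e.source \ K) z ⊆ e.source \ K :=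
      connectedComponentIn_subset _ _
    refine .inr ⟨z, ⟨hzV, hzK⟩, hC.subset_of_isPreconnected
      (isPreconnected_connectedComponentIn.image e
        (e.continuousOn.mono fun x hx => (hsub hx).1)) ?_ ⟨e z, mem_image_of_mem e
          (mem_connectedComponentIn ⟨hVe hzV, hzK⟩), hzC⟩⟩
    rw [disjoint_left]
    rintro _ ⟨y, hy, rfl⟩ (⟨y', hy', heq⟩ | hyL)
    · exact (hsub hy).2 (e.injOn (hVe (hKV hy')) (hsub hy).1 heq ▸ hy')
    · exact disjoint_left.1 hL (e.map_source (hsub hy).1) hyL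
  · refine .inl (isHole_of_frontier_subset hC.nonempty hC.isPreconnected hC.2
      (hC.disjoint.mono_right subset_union_right) fun x hx => ?_)
    exact (hfront hx).resolve_left fun ⟨y, hy, heq⟩ => hmeet ⟨y, hy, heq ▸ hx⟩

theorem OmegaConvex.exists_finset_forall_connectedComponentIn {G K O V : Set ℂ}
    (hconv : OmegaConvex G K) (hK : IsClosed K) (hO : IsOpen O) (hOG : O ⊆ G) (hV : IsOpen V)
    (hKV : K ⊆ V) (hVcomp : IsCompact (closure V)) (hVO : closure V ⊆ O) :
    ∃ t : Finset ℂ, ↑t ⊆ O \ K ∧ ∀ z ∈ V \ K, ∃ c ∈ t, c ∈ connectedComponentIn (O \ K) z := by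
  have hfront : frontier V ⊆ O \ K := fun x hx =>
    ⟨hVO hx.1, fun hxK => (hV.frontier_eq ▸ hx).2 (hKV hxK)⟩
  obtain ⟨t, htO, ht⟩ := _root_.exists_finset_forall_connectedComponentIn
    (hVcomp.of_isClosed_subset isClosed_frontier frontier_subset_closure) (hO.sdiff hK) hfront
  exact ⟨t, htO, fun z hz => ht z <| hconv.connectedComponentIn_inter_frontier_nonempty hK hO hOG
    (hVcomp.isBounded.subset subset_closure) hVO hz⟩

theorem OmegaConvex.image_union {Ω K V L : Set ℂ} {e : OpenPartialHomeomorph ℂ ℂ}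
    (hLconv : OmegaConvex Ω L) (hclosed : IsClosed (e '' K ∪ L)) (hsub : e '' K ∪ L ⊆ Ω)
    (hV : IsOpen V) (hKV : K ⊆ V) (hVe : V ⊆ e.source) (hL : Disjoint e.target L)
    {F : ℂ → ℂ} (hF : DifferentiableOn ℂ F Ω) {B : ℝ} (hB : ∀ w ∈ e '' K ∪ L, ‖F w‖ ≤ B)
    (hlarge : ∀ z ∈ V \ K, ∃ c ∈ connectedComponentIn (e.source \ K) z, B < ‖F (e c)‖) :
    OmegaConvex Ω (e '' K ∪ L) := by
  intro C hC
  obtain hCL | ⟨z, hz, hzC⟩ :=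
    hC.isHole_or_exists_image_connectedComponentIn_subset hclosed hV hKV hVe hL
  · exact hLconv C hCL
  · by_contra hCΩ
    rw [inter_compl_nonempty_iff, not_not] at hCΩ
    obtain ⟨c, hc, hlt⟩ := hlarge z hz
    exact hlt.not_ge (hC.norm_le_of_forall_mem hclosed hsub hCΩ hF hB
      (hzC (mem_image_of_mem e hc)))

theorem norm_mul_sub_le_of_norm_le {w : ℂ} {a M : ℝ} (ha : 0 ≤ a) (hw : ‖w‖ ≤ M) :
    ‖w * (w - a)‖ ≤ M * (M + a) := by
  have hsub : ‖w - a‖ ≤ M + a := by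
    simpa only [Complex.norm_of_nonneg ha] using norm_sub_le_of_le hw (le_refl ‖(a : ℂ)‖)
  rw [norm_mul]
  gcongr
  exact (norm_nonneg w).trans hw

theorem norm_mul_sub_le_of_norm_sub_le {w : ℂ} {a r : ℝ} (ha : 0 ≤ a) (hw : ‖w - a‖ ≤ r) :
    ‖w * (w - a)‖ ≤ (r + a) * r := by
  have hnorm : ‖w‖ ≤ r + a := by
    simpa only [sub_add_cancel, Complex.norm_of_nonneg ha] using
      norm_add_le_of_le hw (le_refl ‖(a : ℂ)‖)
  rw [norm_mul]
  gcongr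
  exact (norm_nonneg w).trans hnorm

theorem mul_sub_le_norm_mul_sub {w : ℂ} {a b r : ℝ} (hr : r ≤ b)
    (hw : ‖w - (a + b)‖ ≤ r) : a * (b - r) ≤ ‖w * (w - a)‖ := by
  have hre : -r ≤ w.re - (a + b) := by
    simpa using (abs_le.1 ((Complex.abs_re_le_norm _).trans hw)).1
  have hle : a ≤ ‖w‖ := by linarith [Complex.re_le_norm w]
  have hsub : b - r ≤ ‖w - a‖ := by
    have := Complex.re_le_norm (w - a)
    rw [Complex.sub_re, Complex.ofReal_re] at this
    linarith
  rw [norm_mul]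
  gcongr

theorem disjoint_of_forall_norm_sub_add_lt {S L : Set ℂ} {ψ f q : ℂ → ℂ} {a M Q : ℝ}
    (ha : M + Q + 1 ≤ a) (hM : ∀ w ∈ L, ‖f w‖ ≤ M) (hQ : ∀ z ∈ S, ‖q z‖ ≤ Q)
    (happrox : ∀ z ∈ S, ‖f (ψ z) - (a + q z)‖ < 1) : Disjoint (ψ '' S) L := by
  rw [disjoint_left]
  rintro _ ⟨z, hz, rfl⟩ hzL
  have hsub : (a : ℂ) = f (ψ z) - q z - (f (ψ z) - (a + q z)) := by ring
  have hnorm : ‖(a : ℂ)‖ < M + Q + 1 := by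
    rw [hsub]
    exact (norm_sub_le_of_le (norm_sub_le_of_le (hM _ hzL) (hQ z hz)) le_rfl).trans_lt
      (add_lt_add_right (happrox z hz) _)
  rw [Complex.norm_real] at hnorm
  exact (ha.trans (le_abs_self a)).not_gt hnorm

/- The function `f * (f - a)` is of size `O(a)` on `e '' K`, where `f` is close to `a`, and on `L`,
where `f` is bounded; it is larger at the points where `f` is close to `a + M + 2`. -/
theorem OmegaConvex.image_union_of_forall_norm_sub_add_lt {Ω K V L : Set ℂ}
    {e : OpenPartialHomeomorph ℂ ℂ} (hLconv : OmegaConvex Ω L) (hclosed : IsClosed (e '' K ∪ L))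
    (hsub : e '' K ∪ L ⊆ Ω) (hV : IsOpen V) (hKV : K ⊆ V) (hVe : V ⊆ e.source)
    (hdisj : Disjoint e.target L) {f q : ℂ → ℂ} (hf : DifferentiableOn ℂ f Ω) {a M : ℝ}
    (hM₀ : 0 ≤ M) (ha : M ^ 2 + 1 ≤ a) (hM : ∀ w ∈ L, ‖f w‖ ≤ M) (hqK : ∀ z ∈ K, ‖q z‖ < 1 / 4)
    (hq : ∀ z ∈ V \ K, ∃ c ∈ connectedComponentIn (e.source \ K) z, q c = M + 2)
    (happrox : ∀ z ∈ e.source, ‖f (e z) - (a + q z)‖ < 1 / 4) :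
    OmegaConvex Ω (e '' K ∪ L) := by
  have ha₁ : 1 ≤ a := by nlinarith
  have ha₀ : 0 ≤ a := by linarith
  refine hLconv.image_union hclosed hsub hV hKV hVe hdisj (F := fun w => f w * (f w - a))
    (hf.mul (hf.sub_const _)) (B := a * (M + 1)) ?_ fun z hz => ?_
  · rintro _ (⟨z, hz, rfl⟩ | hw)
    · have hnear : ‖f (e z) - a‖ ≤ 1 / 2 := by
        have heq : f (e z) - a = f (e z) - (a + q z) + q z := by ring
        rw [heq]
        exact (norm_add_le_of_le (happrox z (hVe (hKV hz))).le (hqK z hz).le).trans (by norm_num)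
      exact (norm_mul_sub_le_of_norm_sub_le ha₀ hnear).trans (by nlinarith)
    · exact (norm_mul_sub_le_of_norm_le ha₀ (hM _ hw)).trans (by nlinarith)
  · obtain ⟨c, hc, hqc⟩ := hq z hz
    have hfar := happrox c (connectedComponentIn_subset _ _ hc).1
    rw [hqc] at hfar
    refine ⟨c, hc, lt_of_lt_of_le ?_ (mul_sub_le_norm_mul_sub (b := M + 2) (r := 1 / 4)
      (by linarith) (by exact_mod_cast hfar.le))⟩
    nlinarith

theorem UniversalFor.exists_ge_union_omegaConvex {G Ω K L : Set ℂ} {φ : ℕ → ℂ → ℂ} {f : ℂ → ℂ}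
    (hu : UniversalFor G φ f) (hf : DifferentiableOn ℂ f Ω) (hG : IsOpen G)
    (hφd : ∀ n, DifferentiableOn ℂ (φ n) G) (hφm : ∀ n, MapsTo (φ n) G Ω)
    (hinj : EventuallyInjective G φ) (hKG : K ⊆ G) (hK : IsCompact K) (hKconv : OmegaConvex G K)
    (hLΩ : L ⊆ Ω) (hL : IsCompact L) (hLconv : OmegaConvex Ω L) (N : ℕ) :
    ∃ n ≥ N, φ n '' K ∩ L = ∅ ∧ OmegaConvex Ω (φ n '' K ∪ L) := by
  obtain ⟨O, hO, hKO, hOG, hOcomp⟩ := exists_open_between_and_isCompact_closure hK hG hKG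
  obtain ⟨V, hV, hKV, hVO, hVcomp⟩ := exists_open_between_and_isCompact_closure hK hO hKO
  have hOG' : O ⊆ G := subset_closure.trans hOG
  obtain ⟨N', hN'⟩ := hinj (closure O) hOG hOcomp
  obtain ⟨M, hM⟩ := hL.exists_bound_of_continuousOn (hf.continuousOn.mono hLΩ)
  obtain ⟨t, htO, ht⟩ :=
    hKconv.exists_finset_forall_connectedComponentIn hK.isClosed hO hOG' hV hKV hVcomp hVO
  obtain ⟨q, hq, hqK, hqt⟩ := hKconv.exists_forall_norm_lt_and_forall_eq hK hKG
    (disjoint_left.2 fun c hc => (htO hc).2) (↑|M| + 2) (by norm_num : (0 : ℝ) < 1 / 4)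
  obtain ⟨Q, hQ⟩ := hOcomp.exists_bound_of_continuousOn (hq.continuousOn.mono hOG)
  obtain ⟨n, hn, a, ha, happrox⟩ := hu.exists_ge_forall_norm_sub_add_lt hq hOG hOcomp
    (by norm_num : (0 : ℝ) < 1 / 4) (|M| ^ 2 + |M| + |Q| + 1) (max N N')
  obtain ⟨U, -, hOU, -, hinjU⟩ := hN' n ((le_max_right _ _).trans hn)
  obtain ⟨e, rfl, he⟩ := exists_openPartialHomeomorph_of_injOn hO ((hφd n).mono hOG')
    (hinjU.mono (subset_closure.trans hOU))
  have happrox' (z : ℂ) (hz : z ∈ e.source) := happrox z (subset_closure hz)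
  have hML (w : ℂ) (hw : w ∈ L) : ‖f w‖ ≤ |M| := (hM w hw).trans (le_abs_self M)
  have hdisj : Disjoint (φ n '' e.source) L := disjoint_of_forall_norm_sub_add_lt
    (by linarith [sq_nonneg |M|]) hML
    (fun z hz => (hQ z (subset_closure hz)).trans (le_abs_self Q))
    fun z hz => (happrox' z hz).trans (by norm_num)
  refine ⟨n, (le_max_left _ _).trans hn, disjoint_iff_inter_eq_empty.1
    (hdisj.mono_left (image_mono hKO)), ?_⟩
  have hcompact := (hK.image_of_continuousOn ((hφd n).continuousOn.mono hKG)).union hL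
  have hsub := union_subset ((hφm n).mono_left hKG).image_subset hLΩ
  rw [← he] at happrox' hdisj hcompact hsub ⊢
  rw [e.image_source_eq_target] at hdisj
  refine hLconv.image_union_of_forall_norm_sub_add_lt hcompact.isClosed hsub hV hKV
    (subset_closure.trans hVO) hdisj hf (abs_nonneg M) (by linarith [abs_nonneg M, abs_nonneg Q])
    hML hqK (fun z hz => ?_) happrox'
  obtain ⟨c, hc, hcz⟩ := ht z hz
  exact ⟨c, hcz, hqt c hc⟩

end Necessity

section Transitivity

open TopologicalSpace

open scoped Topology

theorem exists_denseRange_of_forall_nhds_inter_preimage_nonempty {ι X Y : Type*}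
    [TopologicalSpace X] [BaireSpace X] [Nonempty X] [TopologicalSpace Y]
    [SecondCountableTopology Y] {T : ι → X → Y} (hT : ∀ i, Continuous (T i))
    (htrans : ∀ x y, ∀ V ∈ 𝓝 x, ∀ W ∈ 𝓝 y, ∃ i, (V ∩ T i ⁻¹' W).Nonempty) :
    ∃ x, DenseRange fun i => T i x := by
  have hopen (W : Set Y) (hW : W ∈ countableBasis Y) : IsOpen (⋃ i, T i ⁻¹' W) :=
    isOpen_iUnion fun i => (isOpen_of_mem_countableBasis hW).preimage (hT i)
  have hdense (W : Set Y) (hW : W ∈ countableBasis Y) : Dense (⋃ i, T i ⁻¹' W) := by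
    obtain ⟨y, hy⟩ := nonempty_of_mem_countableBasis hW
    refine dense_iff_inter_open.2 fun V hV ⟨x, hx⟩ => ?_
    obtain ⟨i, hi⟩ := htrans x y V (hV.mem_nhds hx) W
      ((isOpen_of_mem_countableBasis hW).mem_nhds hy)
    exact hi.mono (inter_subset_inter_right V (subset_iUnion_of_subset i Subset.rfl))
  obtain ⟨x, hx⟩ := (dense_biInter_of_isOpen hopen (countable_countableBasis Y) hdense).nonempty
  refine ⟨x, (isBasis_countableBasis Y).dense_iff.2 fun W hW _ => ?_⟩
  obtain ⟨i, hi⟩ := mem_iUnion.1 (mem_iInter₂.1 hx W hW)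
  exact ⟨T i x, hi, mem_range_self i⟩

end Transitivity

section HolomorphicFunctions

open scoped Topology

variable {G Ω : Set ℂ}

theorem mem_holRestrictions_self_iff {u : C(Ω, ℂ)} :
    u ∈ holRestrictions Ω Ω ↔ DifferentiableOn ℂ (Function.extend Subtype.val u 0) Ω := by
  have hext (z : Ω) : Function.extend Subtype.val u 0 (z : ℂ) = u z :=
    Subtype.val_injective.extend_apply u 0 z
  refine ⟨fun ⟨F, hF, hFu⟩ => hF.congr fun z hz => ?_, fun h => ⟨_, h, fun z => (hext z).symm⟩⟩
  rw [hext ⟨z, hz⟩, hFu]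

theorem isClosed_holRestrictions_self (hΩ : IsOpen Ω) :
    IsClosed (holRestrictions Ω Ω : Set C(Ω, ℂ)) := by
  have : LocallyCompactSpace Ω := hΩ.locallyCompactSpace
  refine isClosed_of_closure_subset fun u hu => mem_holRestrictions_self_iff.2 ?_
  have hne : (𝓝[(holRestrictions Ω Ω : Set C(Ω, ℂ))] u).NeBot :=
    mem_closure_iff_nhdsWithin_neBot.1 hu
  have hlim : TendstoLocallyUniformlyOn (fun v : C(Ω, ℂ) => Function.extend Subtype.val v 0)
      (Function.extend Subtype.val u 0) (𝓝[(holRestrictions Ω Ω : Set C(Ω, ℂ))] u) Ω := by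
    rw [tendstoLocallyUniformlyOn_iff_tendstoLocallyUniformly_comp_coe]
    simp only [Function.comp_def, Subtype.val_injective.extend_apply]
    exact ContinuousMap.tendsto_iff_tendstoLocallyUniformly.1 nhdsWithin_le_nhds
  refine hlim.differentiableOn ?_ hΩ
  filter_upwards [self_mem_nhdsWithin] with v hv using mem_holRestrictions_self_iff.1 hv

theorem baireSpace_holRestrictions_self (hΩ : IsOpen Ω) : BaireSpace (holRestrictions Ω Ω) := by
  have : LocallyCompactSpace Ω := hΩ.locallyCompactSpace
  have := (isClosed_holRestrictions_self hΩ).isCompletelyPseudoMetrizableSpace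
  exact BaireSpace.of_completelyPseudoMetrizable

theorem hasBasis_nhds_omegaConvex (hΩ : IsOpen Ω) (u : C(Ω, ℂ)) :
    (𝓝 u).HasBasis
      (fun p : Set ℂ × ℝ => (IsCompact p.1 ∧ p.1 ⊆ Ω ∧ OmegaConvex Ω p.1) ∧ 0 < p.2)
      fun p => {v | ∀ z : Ω, (z : ℂ) ∈ p.1 → ‖v z - u z‖ < p.2} := by
  refine (nhds_basis_uniformity uniformity_basis_dist.compactConvergenceUniformity).to_hasBasis
    (fun p hp => ?_) fun p hp => ?_
  · obtain ⟨L, hL, hKL, hLΩ, hLconv⟩ := exists_isCompact_omegaConvex_superset hΩ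
      (hp.1.image continuous_subtype_val) (Subtype.coe_image_subset Ω p.1)
    exact ⟨(L, p.2), ⟨⟨hL, hLΩ, hLconv⟩, hp.2⟩, fun v hv z hz =>
      (dist_eq_norm (v z) (u z)).trans_lt (hv z (hKL (mem_image_of_mem _ hz)))⟩
  · exact ⟨(Subtype.val ⁻¹' p.1, p.2),
      ⟨Topology.IsInducing.subtypeVal.isCompact_preimage' hp.1.1 (by simpa using hp.1.2.1), hp.2⟩,
      fun v hv z hz => (dist_eq_norm (v z) (u z)).symm.trans_lt (hv z hz)⟩

theorem hasBasis_nhds_holRestrictions_self (hΩ : IsOpen Ω) (u : holRestrictions Ω Ω) :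
    (𝓝 u).HasBasis
      (fun p : Set ℂ × ℝ => (IsCompact p.1 ∧ p.1 ⊆ Ω ∧ OmegaConvex Ω p.1) ∧ 0 < p.2)
      fun p => {v | ∀ z : Ω, (z : ℂ) ∈ p.1 → ‖(v : C(Ω, ℂ)) z - (u : C(Ω, ℂ)) z‖ < p.2} := by
  rw [nhds_subtype_eq_comap]
  exact (hasBasis_nhds_omegaConvex hΩ u).comap Subtype.val

/-- The composition operator `u ↦ u ∘ ψ` from `H(Ω)` to `H(G)` of a holomorphic map
`ψ : G → Ω`. -/
noncomputable def compHol {ψ : ℂ → ℂ} (hψ : DifferentiableOn ℂ ψ G) (hm : MapsTo ψ G Ω)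
    (u : holRestrictions Ω Ω) : holRestrictions G G :=
  ⟨(u : C(Ω, ℂ)).comp ⟨hm.restrict, hψ.continuousOn.mapsToRestrict hm⟩, by
    obtain ⟨F, hF, hFu⟩ := u.2
    exact ⟨F ∘ ψ, hF.comp hψ hm, fun z => hFu _⟩⟩

theorem continuous_compHol {ψ : ℂ → ℂ} (hψ : DifferentiableOn ℂ ψ G) (hm : MapsTo ψ G Ω) :
    Continuous (compHol hψ hm) :=
  ((ContinuousMap.continuous_precomp _).comp continuous_subtype_val).subtype_mk _

end HolomorphicFunctions

section Sufficiency

open scoped Topology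

theorem exists_differentiableOn_union_eqOn_eqOn {𝕜 E F : Type*} [NontriviallyNormedField 𝕜]
    [NormedAddCommGroup E] [NormedSpace 𝕜 E] [NormedAddCommGroup F] [NormedSpace 𝕜 F]
    {s t : Set E} {f g : E → F} (hf : DifferentiableOn 𝕜 f s) (hg : DifferentiableOn 𝕜 g t)
    (hs : IsOpen s) (ht : IsOpen t) (hst : Disjoint s t) :
    ∃ h : E → F, DifferentiableOn 𝕜 h (s ∪ t) ∧ EqOn h f s ∧ EqOn h g t := by
  classical
  have hsf : EqOn (s.piecewise f g) f s := s.piecewise_eqOn f g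
  have htg : EqOn (s.piecewise f g) g t :=
    (s.piecewise_eqOn_compl f g).mono hst.subset_compl_left
  exact ⟨_, (hf.congr hsf).union_of_isOpen (hg.congr htg) hs ht, hsf, htg⟩

variable {G Ω K L U : Set ℂ} {φ : ℕ → ℂ → ℂ} {ψ F g : ℂ → ℂ}

/- Runge's theorem is applied to the function equal to `g ∘ ψ⁻¹` near `ψ '' K` and to `F`
near `L`. -/
theorem OmegaConvex.exists_forall_norm_comp_sub_lt (hΩ : IsOpen Ω) (hU : IsOpen U)
    (hψ : DifferentiableOn ℂ ψ U) (hinj : InjOn ψ U) (hK : IsCompact K) (hKU : K ⊆ U)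
    (hKΩ : MapsTo ψ K Ω) (hL : IsCompact L) (hLΩ : L ⊆ Ω) (hdisj : Disjoint (ψ '' K) L)
    (hconv : OmegaConvex Ω (ψ '' K ∪ L)) (hF : DifferentiableOn ℂ F Ω)
    (hg : DifferentiableOn ℂ g U) {ε : ℝ} (hε : 0 < ε) :
    ∃ F' : ℂ → ℂ, DifferentiableOn ℂ F' Ω ∧ (∀ z ∈ L, ‖F' z - F z‖ < ε) ∧
      ∀ z ∈ K, ‖F' (ψ z) - g z‖ < ε := by
  obtain ⟨e, rfl, rfl⟩ := exists_openPartialHomeomorph_of_injOn hU hψ hinj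
  have hKe : IsCompact (e '' K) := hK.image_of_continuousOn (hψ.continuousOn.mono hKU)
  obtain ⟨V, W, hV, hW, hKV, hLW, hVW⟩ := SeparatedNhds.of_isCompact_isCompact hKe hL hdisj
  have hge : DifferentiableOn ℂ (g ∘ e.symm) (e.target ∩ V) :=
    (hg.comp (differentiableOn_symm_of_differentiableOn e hψ) e.mapsTo_symm).mono
      inter_subset_left
  obtain ⟨h, hh, hhg, hhF⟩ := exists_differentiableOn_union_eqOn_eqOn hge
    (hF.mono (inter_subset_left (t := W))) (e.open_target.inter hV) (hΩ.inter hW)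
    (hVW.mono inter_subset_right inter_subset_right)
  have hKsub : e '' K ⊆ e.target ∩ V :=
    subset_inter (image_subset_iff.2 fun z hz => e.map_source (hKU hz)) hKV
  have hLsub : L ⊆ Ω ∩ W := subset_inter hLΩ hLW
  obtain ⟨F', hF', hF'h⟩ := hconv.exists_forall_norm_sub_lt (hKe.union hL)
    (union_subset hKΩ.image_subset hLΩ) ((e.open_target.inter hV).union (hΩ.inter hW))
    (union_subset_union hKsub hLsub) hh hε
  refine ⟨F', hF', fun z hz => ?_, fun z hz => ?_⟩
  · rw [← hhF (hLsub hz)]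
    exact hF'h z (Or.inr hz)
  · have hz' := mem_image_of_mem e hz
    have hhz : h (e z) = g z := by
      rw [hhg (hKsub hz'), Function.comp_apply, e.left_inv (hKU hz)]
    rw [← hhz]
    exact hF'h (e z) (Or.inl hz')

theorem universalFor_of_denseRange_compHol (hG : IsOpen G)
    (hφd : ∀ n, DifferentiableOn ℂ (φ n) G) (hφm : ∀ n, MapsTo (φ n) G Ω)
    {u : holRestrictions Ω Ω} (hu : DenseRange fun n => compHol (hφd n) (hφm n) u)
    (hF : ∀ z : Ω, (u : C(Ω, ℂ)) z = F z) : UniversalFor G φ F := by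
  intro g hg K hKG hK ε hε
  obtain ⟨L, hL, hKL, hLG, hLconv⟩ := exists_isCompact_omegaConvex_superset hG hK hKG
  let v : holRestrictions G G :=
    ⟨⟨G.domRestrict g, hg.continuousOn.domRestrict⟩, g, hg, fun _ => rfl⟩
  obtain ⟨_, ⟨n, rfl⟩, hn⟩ := (mem_closure_iff_nhds_basis
    (hasBasis_nhds_holRestrictions_self hG v)).1 (hu v) (L, ε) ⟨⟨hL, hLG, hLconv⟩, hε⟩
  refine ⟨n, fun z hz => ?_⟩
  rw [← hF ⟨φ n z, hφm n (hKG hz)⟩]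
  exact hn ⟨z, hKG hz⟩ (hKL hz)

theorem exists_nonempty_inter_preimage_compHol (hG : IsOpen G) (hΩ : IsOpen Ω)
    (hφd : ∀ n, DifferentiableOn ℂ (φ n) G) (hφm : ∀ n, MapsTo (φ n) G Ω)
    (hinj : EventuallyInjective G φ)
    (h : ∀ K : Set ℂ, K ⊆ G → IsCompact K → OmegaConvex G K →
      ∀ L : Set ℂ, L ⊆ Ω → IsCompact L → OmegaConvex Ω L →
        ∀ N : ℕ, ∃ n ≥ N, φ n '' K ∩ L = ∅ ∧ OmegaConvex Ω (φ n '' K ∪ L))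
    (u : holRestrictions Ω Ω) (v : holRestrictions G G) {V : Set (holRestrictions Ω Ω)}
    (hV : V ∈ 𝓝 u) {W : Set (holRestrictions G G)} (hW : W ∈ 𝓝 v) :
    ∃ n, (V ∩ compHol (hφd n) (hφm n) ⁻¹' W).Nonempty := by
  obtain ⟨⟨L, ε⟩, ⟨⟨hL, hLΩ, hLconv⟩, hε⟩, hLV⟩ :=
    (hasBasis_nhds_holRestrictions_self hΩ u).mem_iff.1 hV
  obtain ⟨⟨K, δ⟩, ⟨⟨hK, hKG, hKconv⟩, hδ⟩, hKW⟩ :=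
    (hasBasis_nhds_holRestrictions_self hG v).mem_iff.1 hW
  obtain ⟨F, hF, hFu⟩ := u.2
  obtain ⟨g, hg, hgv⟩ := v.2
  obtain ⟨N, hN⟩ := hinj K hKG hK
  obtain ⟨n, hn, hdisj, hconv⟩ := h K hKG hK hKconv L hLΩ hL hLconv N
  obtain ⟨U, hU, hKU, hUG, hUinj⟩ := hN n hn
  obtain ⟨F', hF', hF'F, hF'g⟩ := hconv.exists_forall_norm_comp_sub_lt hΩ hU
    ((hφd n).mono hUG) hUinj hK hKU ((hφm n).mono_left hKG) hL hLΩ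
    (disjoint_iff_inter_eq_empty.2 hdisj) hF (hg.mono hUG) (lt_min hε hδ)
  let w : holRestrictions Ω Ω :=
    ⟨⟨Ω.domRestrict F', hF'.continuousOn.domRestrict⟩, F', hF', fun _ => rfl⟩
  refine ⟨n, w, hLV fun z hz => ?_, hKW fun z hz => ?_⟩
  · rw [hFu]
    exact (hF'F z hz).trans_le (min_le_left ε δ)
  · rw [hgv]
    exact (hF'g z hz).trans_le (min_le_right ε δ)

theorem exists_universalFor_of_forall_exists_union_omegaConvex (hG : IsOpen G) (hΩ : IsOpen Ω)
    (hφd : ∀ n, DifferentiableOn ℂ (φ n) G) (hφm : ∀ n, MapsTo (φ n) G Ω)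
    (hinj : EventuallyInjective G φ)
    (h : ∀ K : Set ℂ, K ⊆ G → IsCompact K → OmegaConvex G K →
      ∀ L : Set ℂ, L ⊆ Ω → IsCompact L → OmegaConvex Ω L →
        ∀ N : ℕ, ∃ n ≥ N, φ n '' K ∩ L = ∅ ∧ OmegaConvex Ω (φ n '' K ∪ L)) :
    ∃ f : ℂ → ℂ, DifferentiableOn ℂ f Ω ∧ UniversalFor G φ f := by
  have : LocallyCompactSpace G := hG.locallyCompactSpace
  have : SecondCountableTopology (holRestrictions G G) :=
    Topology.IsInducing.subtypeVal.secondCountableTopology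
  have : BaireSpace (holRestrictions Ω Ω) := baireSpace_holRestrictions_self hΩ
  obtain ⟨u, hu⟩ := exists_denseRange_of_forall_nhds_inter_preimage_nonempty
    (fun n => continuous_compHol (hφd n) (hφm n))
    fun u v _ hV _ hW => exists_nonempty_inter_preimage_compHol hG hΩ hφd hφm hinj h u v hV hW
  obtain ⟨F, hF, hFu⟩ := u.2
  exact ⟨F, hF, universalFor_of_denseRange_compHol hG hφd hφm hu hFu⟩

end Sufficiency

theorem universal_iff_union_omegaConvex_general
    (G Ω : Set ℂ) (hG : IsOpen G) (hΩ : IsOpen Ω)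
    (φ : ℕ → ℂ → ℂ) (hφd : ∀ n, DifferentiableOn ℂ (φ n) G)
    (hφm : ∀ n, Set.MapsTo (φ n) G Ω)
    (hinj : EventuallyInjective G φ) :
    (∃ f : ℂ → ℂ, DifferentiableOn ℂ f Ω ∧ UniversalFor G φ f) ↔
      ∀ K : Set ℂ, K ⊆ G → IsCompact K → OmegaConvex G K →
        ∀ L : Set ℂ, L ⊆ Ω → IsCompact L → OmegaConvex Ω L →
          ∀ N : ℕ, ∃ n ≥ N, (φ n '' K) ∩ L = ∅ ∧ OmegaConvex Ω ((φ n '' K) ∪ L) :=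
  ⟨fun ⟨_, hf, hu⟩ _ hKG hK hKconv _ hLΩ hL hLconv N =>
      hu.exists_ge_union_omegaConvex hf hG hφd hφm hinj hKG hK hKconv hLΩ hL hLconv N,
    exists_universalFor_of_forall_exists_union_omegaConvex hG hΩ hφd hφm hinj⟩

/-- Theorem `thm-charac-injective` (1). -/
theorem universal_iff_union_omegaConvex
    (G Ω : Set ℂ) (hG : IsOpen G) (hGconn : IsConnected G)
    (hΩ : IsOpen Ω) (hΩconn : IsConnected Ω)
    (φ : ℕ → ℂ → ℂ) (hφd : ∀ n, DifferentiableOn ℂ (φ n) G)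
    (hφm : ∀ n, Set.MapsTo (φ n) G Ω)
    (hinj : EventuallyInjective G φ) :
    (∃ f : ℂ → ℂ, DifferentiableOn ℂ f Ω ∧ UniversalFor G φ f) ↔
      ∀ K : Set ℂ, K ⊆ G → IsCompact K → OmegaConvex G K →
        ∀ L : Set ℂ, L ⊆ Ω → IsCompact L → OmegaConvex Ω L →
          ∀ N : ℕ, ∃ n ≥ N, (φ n '' K) ∩ L = ∅ ∧ OmegaConvex Ω ((φ n '' K) ∪ L) :=
  universal_iff_union_omegaConvex_general G Ω hG hΩ φ hφd hφm hinj
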